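/- Let d ≥ 3, γ > −1, 1 ≤ p ≤ d, a > 0 with a ≠ 1, and let k_1,k_2,k_3,k_4 be distinct integers in {1,…,d+1}. Let A_1,…,A_4 ∈ ℝ and set A_5 = (m_{(3,1)} − 2 m_{(2,2)}) / (a(a−1)² p). If Σ_{j=1}^4 A_j S_ℓ(v_{k_j}) + A_5 S_ℓ(u_{a,p}) = m_ℓ holds for the four partitions ℓ = (4), (2,2), (2,1,1), (1,1,1,1), then it also holds for ℓ = (3,1), and consequently w_γ ∫_{𝒯^{d+1}} f(ξ) ξ^γ dξ = Σ_{j=1}^4 A_j · avg_{v_{k_j}𝒜_d} f + A_5 · avg_{u_{a,p}𝒜_d} f for every homogeneous polynomial f of degree 4 in d+1 variables. -/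

import Mathlib

open MeasureTheory Finset

/-- The standard simplex `T^d` in `ℝ^d`. -/
def Td (d : ℕ) : Set (Fin d → ℝ) :=
  {x | (∀ i, 0 ≤ x i) ∧ ∑ i, x i ≤ 1}

/-- The weight function `W_γ(x) = (x_1 ⋯ x_d (1 - |x|₁))^γ` on `T^d`. -/
noncomputable def Wg (d : ℕ) (γ : ℝ) (x : Fin d → ℝ) : ℝ :=
  ((∏ i, x i) * (1 - ∑ i, x i)) ^ γ

/-- The normalization constant `w_γ = Γ((d+1)(γ+1)) / Γ(γ+1)^(d+1)`. -/
noncomputable def wg (d : ℕ) (γ : ℝ) : ℝ :=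
  Real.Gamma ((d + 1) * (γ + 1)) / (Real.Gamma (γ + 1)) ^ (d + 1)

/-- Homogeneous coordinates: `x ↦ (x, 1 - |x|₁) ∈ 𝒯^{d+1}`. -/
noncomputable def lift (d : ℕ) (x : Fin d → ℝ) : Fin (d + 1) → ℝ :=
  Fin.snoc x (1 - ∑ i, x i)

/-- Evaluation of the monomial symmetric polynomial with exponent vector `lv`:
the sum of all distinct monomials whose exponent vector is a permutation of `lv`. -/
noncomputable def msymmEval (d : ℕ) (lv : Fin (d + 1) → ℕ) (x : Fin (d + 1) → ℝ) : ℝ :=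
  ∑ β ∈ Finset.image (fun σ : Equiv.Perm (Fin (d + 1)) => lv ∘ σ) Finset.univ,
    ∏ i, x i ^ β i

/-- Pad a list of exponents (a partition) into an exponent vector in `d+1` variables. -/
def pvec (d : ℕ) (l : List ℕ) : Fin (d + 1) → ℕ :=
  fun i => l.getD (i : ℕ) 0

/-- The moment `m_ℓ := w_γ ∫_{𝒯^{d+1}} S_ℓ(ξ) ξ^γ dξ`. -/
noncomputable def momentS (d : ℕ) (γ : ℝ) (lv : Fin (d + 1) → ℕ) : ℝ :=
  wg d γ * ∫ x in Td d, msymmEval d lv (lift d x) * Wg d γ x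

/-- The average of `f` over the set of distinct coordinate permutations of `y`. -/
noncomputable def orbitAvg (d : ℕ) (y : Fin (d + 1) → ℝ) (f : (Fin (d + 1) → ℝ) → ℝ) : ℝ :=
  ((Finset.image (fun σ : Equiv.Perm (Fin (d + 1)) => y ∘ σ) Finset.univ).card : ℝ)⁻¹ *
    ∑ z ∈ Finset.image (fun σ : Equiv.Perm (Fin (d + 1)) => y ∘ σ) Finset.univ, f z

/-- `v_k = (1,…,1,0,…,0)` with `k` ones, in `d+1` coordinates. -/
def vk (d k : ℕ) : Fin (d + 1) → ℝ :=
  fun i => if (i : ℕ) < k then 1 else 0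

/-- `u_{a,p} = (a,1,…,1,0,…,0)` with one entry `a` followed by `p` ones. -/
def uap (d : ℕ) (a : ℝ) (p : ℕ) : Fin (d + 1) → ℝ :=
  fun i => if (i : ℕ) = 0 then a else if (i : ℕ) ≤ p then 1 else 0

theorem sum_image_perm_eq {ι M : Type*} [Fintype ι] [DecidableEq ι] [DecidableEq M] (y : ι → M)
    (h : (ι → M) → ℝ) :
    ((image (fun σ : Equiv.Perm ι => y ∘ σ) univ).card : ℝ)⁻¹ *
        ∑ z ∈ image (fun σ : Equiv.Perm ι => y ∘ σ) univ, h z =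
      (Fintype.card (Equiv.Perm ι) : ℝ)⁻¹ * ∑ σ : Equiv.Perm ι, h (y ∘ σ) := by
  set I := image (fun σ : Equiv.Perm ι => y ∘ σ) univ with hI
  set c := #{σ : Equiv.Perm ι | y ∘ σ = y} with hc
  have hfib : ∀ z ∈ I, #{σ : Equiv.Perm ι | y ∘ σ = z} = c := by
    intro z hz
    obtain ⟨τ, -, rfl⟩ := mem_image.1 hz
    refine card_bij' (fun σ _ => σ * τ⁻¹) (fun σ _ => σ * τ) ?_ ?_ ?_ ?_
    · intro σ hσ
      simp only [mem_filter, mem_univ, true_and] at hσ ⊢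
      funext i
      simpa using congrFun hσ (τ⁻¹ i)
    · intro σ hσ
      simp only [mem_filter, mem_univ, true_and] at hσ ⊢
      funext i
      simpa using congrFun hσ (τ i)
    · simp
    · simp
  have hsum : ∀ g : (ι → M) → ℝ, ∑ σ : Equiv.Perm ι, g (y ∘ σ) = c * ∑ z ∈ I, g z := by
    intro g
    rw [Finset.sum_comp g (fun σ : Equiv.Perm ι => y ∘ σ), mul_sum]
    refine sum_congr rfl fun z hz => ?_
    rw [hfib z hz, nsmul_eq_mul]
  have hcard : (Fintype.card (Equiv.Perm ι) : ℝ) = c * (I.card : ℝ) := by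
    simpa using hsum fun _ => 1
  have hne : (Fintype.card (Equiv.Perm ι) : ℝ) ≠ 0 := by
    exact_mod_cast Fintype.card_ne_zero
  have hc0 : (c : ℝ) ≠ 0 := by
    rintro h0
    rw [h0, zero_mul] at hcard
    exact hne hcard
  rw [hsum, hcard, mul_inv]
  field_simp

theorem msymmEval_comp_perm (d : ℕ) (α : Fin (d + 1) → ℕ) (τ : Equiv.Perm (Fin (d + 1)))
    (x : Fin (d + 1) → ℝ) : msymmEval d (α ∘ τ) x = msymmEval d α x := by
  unfold msymmEval
  congr 1
  ext β
  simp only [mem_image, mem_univ, true_and]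
  constructor
  · rintro ⟨σ, rfl⟩
    exact ⟨τ * σ, rfl⟩
  · rintro ⟨σ, rfl⟩
    exact ⟨τ⁻¹ * σ, by funext i; simp⟩

theorem prod_pow_comp_perm {ι : Type*} [Fintype ι] (α : ι → ℕ) (x : ι → ℝ) (σ : Equiv.Perm ι) :
    ∏ i, x i ^ (α ∘ σ) i = ∏ i, (x ∘ ⇑σ⁻¹) i ^ α i := by
  rw [← Equiv.prod_comp σ (fun i => (x ∘ ⇑σ⁻¹) i ^ α i)]
  simp

theorem orbitAvg_monomial (d : ℕ) (α : Fin (d + 1) → ℕ) (y : Fin (d + 1) → ℝ) :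
    orbitAvg d y (fun z => ∏ i, z i ^ α i) =
      ((image (fun σ : Equiv.Perm (Fin (d + 1)) => α ∘ σ) univ).card : ℝ)⁻¹ *
        msymmEval d α y := by
  unfold orbitAvg msymmEval
  rw [sum_image_perm_eq, sum_image_perm_eq α fun β => ∏ i, y i ^ β i]
  congr 1
  rw [← Equiv.sum_comp (Equiv.inv (Equiv.Perm (Fin (d + 1))))]
  exact sum_congr rfl fun σ _ => (prod_pow_comp_perm α y σ).symm

theorem exists_perm_apply_apply_eq {ι : Type*} [DecidableEq ι] {a b i j : ι} (hab : a ≠ b)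
    (hij : i ≠ j) : ∃ σ : Equiv.Perm ι, σ i = a ∧ σ j = b := by
  refine ⟨Equiv.swap b (Equiv.swap i a j) * Equiv.swap i a, ?_, ?_⟩
  · have h : a ≠ Equiv.swap i a j := by
      intro h
      exact hij ((Equiv.swap i a).injective (by simpa using h))
    simp [Equiv.swap_apply_of_ne_of_ne hab h]
  · simp

theorem image_perm_pvec_pair (d : ℕ) (hd : 3 ≤ d) (r s : ℕ) :
    image (fun σ : Equiv.Perm (Fin (d + 1)) => pvec d [r, s] ∘ σ) univ =
      image (fun q : Fin (d + 1) × Fin (d + 1) =>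
        (Pi.single q.1 r + Pi.single q.2 s : Fin (d + 1) → ℕ)) univ.offDiag := by
  have key : ∀ (σ : Equiv.Perm (Fin (d + 1))) (i j), σ i = ⟨0, by omega⟩ → σ j = ⟨1, by omega⟩ →
      pvec d [r, s] ∘ σ = Pi.single i r + Pi.single j s := by
    intro σ i j hi hj
    funext m
    have h0 : m = i ↔ ((σ m : Fin (d + 1)) : ℕ) = 0 := by
      rw [← σ.injective.eq_iff, hi, Fin.ext_iff]
    have h1 : m = j ↔ ((σ m : Fin (d + 1)) : ℕ) = 1 := by
      rw [← σ.injective.eq_iff, hj, Fin.ext_iff]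
    simp only [pvec, Function.comp_apply, Pi.add_apply, Pi.single_apply, h0, h1]
    rcases ((σ m : Fin (d + 1)) : ℕ) with _ | _ | n <;> simp
  ext β
  simp only [mem_image, mem_univ, true_and, mem_offDiag]
  constructor
  · rintro ⟨σ, rfl⟩
    refine ⟨(σ⁻¹ ⟨0, by omega⟩, σ⁻¹ ⟨1, by omega⟩), by simp, ?_⟩
    exact (key σ _ _ (by simp) (by simp)).symm
  · rintro ⟨⟨i, j⟩, hij, rfl⟩
    obtain ⟨σ, h0, h1⟩ := exists_perm_apply_apply_eq
      (a := (⟨0, by omega⟩ : Fin (d + 1))) (b := ⟨1, by omega⟩) (by simp) hij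
    exact ⟨σ, key σ i j h0 h1⟩

theorem prod_pow_single_add_single {ι : Type*} [Fintype ι] [DecidableEq ι] (x : ι → ℝ) (i j : ι)
    (r s : ℕ) : ∏ m, x m ^ (Pi.single i r + Pi.single j s : ι → ℕ) m = x i ^ r * x j ^ s := by
  simp only [Pi.add_apply, pow_add, prod_mul_distrib]
  simp [Pi.single_apply]

theorem sum_offDiag_pow_mul_pow {ι : Type*} [Fintype ι] [DecidableEq ι] (x : ι → ℝ) (r s : ℕ) :
    ∑ q ∈ (univ : Finset ι).offDiag, x q.1 ^ r * x q.2 ^ s =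
      (∑ i, x i ^ r) * (∑ i, x i ^ s) - ∑ i, x i ^ (r + s) := by
  have h := sum_union (disjoint_diag_offDiag (univ : Finset ι))
    (f := fun q => x q.1 ^ r * x q.2 ^ s)
  rw [diag_union_offDiag, sum_diag, sum_product] at h
  rw [sum_mul_sum, h]
  simp [pow_add]

theorem msymmEval_three_one (d : ℕ) (hd : 3 ≤ d) (x : Fin (d + 1) → ℝ) :
    msymmEval d (pvec d [3, 1]) x = (∑ i, x i ^ 3) * (∑ i, x i ^ 1) - ∑ i, x i ^ 4 := by
  unfold msymmEval
  rw [image_perm_pvec_pair d hd, sum_image]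
  · simp_rw [prod_pow_single_add_single]
    exact sum_offDiag_pow_mul_pow x 3 1
  · rintro ⟨i, j⟩ hq ⟨i', j'⟩ hq' h
    simp only [coe_offDiag, Set.mem_offDiag, mem_coe] at hq hq'
    have h1 := congrFun h i
    have h2 := congrFun h j
    simp only [Pi.add_apply, Pi.single_apply] at h1 h2
    grind

theorem two_mul_msymmEval_two_two (d : ℕ) (hd : 3 ≤ d) (x : Fin (d + 1) → ℝ) :
    2 * msymmEval d (pvec d [2, 2]) x = (∑ i, x i ^ 2) * (∑ i, x i ^ 2) - ∑ i, x i ^ 4 := by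
  unfold msymmEval
  rw [image_perm_pvec_pair d hd, ← sum_offDiag_pow_mul_pow x 2 2]
  rw [← sum_congr rfl fun (q : Fin (d + 1) × Fin (d + 1)) _ =>
    prod_pow_single_add_single x q.1 q.2 2 2]
  refine Eq.trans ?_ (Finset.sum_comp (fun β : Fin (d + 1) → ℕ => ∏ i, x i ^ β i)
    (fun q : Fin (d + 1) × Fin (d + 1) =>
        (Pi.single q.1 2 + Pi.single q.2 2 : Fin (d + 1) → ℕ))).symm
  rw [mul_sum]
  refine sum_congr rfl fun β hβ => ?_
  obtain ⟨⟨i, j⟩, hij, rfl⟩ := mem_image.1 hβ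
  simp only [mem_offDiag, mem_univ, true_and] at hij
  have : ({q ∈ (univ : Finset (Fin (d + 1))).offDiag |
      (Pi.single q.1 2 + Pi.single q.2 2 : Fin (d + 1) → ℕ) = Pi.single i 2 + Pi.single j 2}) =
      {(i, j), (j, i)} := by
    ext ⟨i', j'⟩
    simp only [mem_filter, mem_offDiag, mem_univ, true_and, mem_insert, mem_singleton,
      Prod.mk.injEq]
    constructor
    · rintro ⟨hne, h⟩
      have h1 := congrFun h i
      have h2 := congrFun h j
      simp only [Pi.add_apply, Pi.single_apply] at h1 h2
      grind
    · rintro (⟨rfl, rfl⟩ | ⟨rfl, rfl⟩)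
      · exact ⟨hij, rfl⟩
      · exact ⟨hij.symm, add_comm _ _⟩
  rw [this, card_pair (by simp [hij]), nsmul_eq_mul]
  norm_num

theorem sum_vk_pow (d k : ℕ) {n : ℕ} (hn : n ≠ 0) : ∑ i, vk d k i ^ n = ∑ i, vk d k i := by
  refine sum_congr rfl fun i _ => ?_
  unfold vk
  split_ifs <;> simp [hn]

theorem sum_uap_pow (d : ℕ) (a : ℝ) {p : ℕ} (hpd : p ≤ d) {n : ℕ} (hn : n ≠ 0) :
    ∑ i, uap d a p i ^ n = a ^ n + p := by
  rw [Fin.sum_univ_succ]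
  have h : ∀ i : Fin d, uap d a p i.succ ^ n = if (i : ℕ) < p then (1 : ℝ) else 0 := by
    intro i
    simp only [uap, Fin.val_succ, Nat.add_one_le_iff, Nat.succ_ne_zero, if_false]
    split_ifs <;> simp [hn]
  simp_rw [h]
  rw [Fin.sum_univ_eq_sum_range (fun i => if i < p then (1 : ℝ) else 0) d, ← sum_filter]
  have : {i ∈ range d | i < p} = range p := by
    ext i; simp; omega
  simp [this, uap]

theorem msymmEval_three_one_vk (d : ℕ) (hd : 3 ≤ d) (k : ℕ) :
    msymmEval d (pvec d [3, 1]) (vk d k) = 2 * msymmEval d (pvec d [2, 2]) (vk d k) := by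
  rw [msymmEval_three_one d hd, two_mul_msymmEval_two_two d hd]
  rw [sum_vk_pow d k three_ne_zero, sum_vk_pow d k two_ne_zero, sum_vk_pow d k one_ne_zero]

theorem msymmEval_three_one_uap (d : ℕ) (hd : 3 ≤ d) (a : ℝ) {p : ℕ} (hpd : p ≤ d) :
    msymmEval d (pvec d [3, 1]) (uap d a p) =
      2 * msymmEval d (pvec d [2, 2]) (uap d a p) + a * (a - 1) ^ 2 * p := by
  rw [msymmEval_three_one d hd, two_mul_msymmEval_two_two d hd]
  rw [sum_uap_pow d a hpd three_ne_zero, sum_uap_pow d a hpd two_ne_zero,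
    sum_uap_pow d a hpd one_ne_zero]
  ring

theorem exists_perm_eq_pvec (d : ℕ) (hd : 3 ≤ d) (α : Fin (d + 1) → ℕ) (hα : ∑ i, α i = 4) :
    ∃ l ∈ [[4], [3, 1], [2, 2], [2, 1, 1], [1, 1, 1, 1]], ∃ σ : Equiv.Perm (Fin (d + 1)),
      α ∘ σ = pvec d l := by
  obtain ⟨e, rfl⟩ := Nat.exists_eq_add_of_le' hd
  set σ := Fin.revPerm.trans (Tuple.sort α) with hσ
  have hanti : Antitone (α ∘ σ) := fun i j hij =>
    Tuple.monotone_sort α (Fin.rev_le_rev.2 hij)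
  have hsum : ∑ i, (α ∘ σ) i = 4 := (Equiv.sum_comp σ α).trans hα
  suffices h : ∃ l ∈ [[4], [3, 1], [2, 2], [2, 1, 1], [1, 1, 1, 1]], α ∘ σ = pvec (e + 3) l by
    obtain ⟨l, hl, h⟩ := h
    exact ⟨l, hl, σ, h⟩
  generalize α ∘ σ = β at hanti hsum
  rw [Fin.sum_univ_succ, Fin.sum_univ_succ, Fin.sum_univ_succ, Fin.sum_univ_succ] at hsum
  set b₀ := β 0 with h₀
  set b₁ := β (Fin.succ 0) with h₁
  set b₂ := β (Fin.succ (Fin.succ 0)) with h₂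
  set b₃ := β (Fin.succ (Fin.succ (Fin.succ 0))) with h₃
  have h01 : b₁ ≤ b₀ := hanti (Fin.zero_le _)
  have h12 : b₂ ≤ b₁ := hanti (Fin.succ_le_succ_iff.2 (Fin.zero_le _))
  have h23 : b₃ ≤ b₂ :=
    hanti (Fin.succ_le_succ_iff.2 (Fin.succ_le_succ_iff.2 (Fin.zero_le _)))
  have htail : ∀ i : Fin e, β i.succ.succ.succ.succ = 0 := by
    intro i
    have h3 : β i.succ.succ.succ.succ ≤ b₃ :=
      hanti (Fin.succ_le_succ_iff.2 (Fin.succ_le_succ_iff.2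
        (Fin.succ_le_succ_iff.2 (Fin.zero_le _))))
    have hle := single_le_sum (f := fun i : Fin e => β i.succ.succ.succ.succ)
      (fun _ _ => Nat.zero_le _) (mem_univ i)
    omega
  simp only [htail, sum_const_zero] at hsum
  have hcases : (b₀ = 4 ∧ b₁ = 0 ∧ b₂ = 0 ∧ b₃ = 0) ∨ (b₀ = 3 ∧ b₁ = 1 ∧ b₂ = 0 ∧ b₃ = 0) ∨
      (b₀ = 2 ∧ b₁ = 2 ∧ b₂ = 0 ∧ b₃ = 0) ∨ (b₀ = 2 ∧ b₁ = 1 ∧ b₂ = 1 ∧ b₃ = 0) ∨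
      (b₀ = 1 ∧ b₁ = 1 ∧ b₂ = 1 ∧ b₃ = 1) := by omega
  have hext : ∀ l : List ℕ, l.length ≤ 4 → b₀ = l.getD 0 0 → b₁ = l.getD 1 0 →
      b₂ = l.getD 2 0 → b₃ = l.getD 3 0 → β = pvec (e + 3) l := by
    intro l hl e₀ e₁ e₂ e₃
    funext m
    refine Fin.cases e₀ (fun m => Fin.cases e₁ (fun m => Fin.cases e₂ (fun m =>
      Fin.cases e₃ (fun m => ?_) m) m) m) m
    rw [htail, pvec, List.getD_eq_default _ _ (by simp; omega)]
  rcases hcases with ⟨e₀, e₁, e₂, e₃⟩ | ⟨e₀, e₁, e₂, e₃⟩ | ⟨e₀, e₁, e₂, e₃⟩ |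
    ⟨e₀, e₁, e₂, e₃⟩ | ⟨e₀, e₁, e₂, e₃⟩
  · exact ⟨[4], by simp, hext _ (by simp) e₀ e₁ e₂ e₃⟩
  · exact ⟨[3, 1], by simp, hext _ (by simp) e₀ e₁ e₂ e₃⟩
  · exact ⟨[2, 2], by simp, hext _ (by simp) e₀ e₁ e₂ e₃⟩
  · exact ⟨[2, 1, 1], by simp, hext _ (by simp) e₀ e₁ e₂ e₃⟩
  · exact ⟨[1, 1, 1, 1], by simp, hext _ (by simp) e₀ e₁ e₂ e₃⟩

theorem sum_lift (d : ℕ) (x : Fin d → ℝ) : ∑ i, lift d x i = 1 := by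
  simp [lift, Fin.sum_univ_castSucc]

theorem mem_Td_iff (d : ℕ) (x : Fin d → ℝ) : x ∈ Td d ↔ ∀ i, 0 ≤ lift d x i := by
  simp [Td, lift, Fin.forall_fin_succ']

theorem Wg_eq_prod_lift (d : ℕ) (γ : ℝ) (x : Fin d → ℝ) :
    Wg d γ x = (∏ i, lift d x i) ^ γ := by
  simp [Wg, lift, Fin.prod_univ_castSucc]

/-- The affine action on `T^d` of a permutation of the homogeneous coordinates. -/
noncomputable def permTd (d : ℕ) (σ : Equiv.Perm (Fin (d + 1))) (x : Fin d → ℝ) : Fin d → ℝ :=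
  Fin.init (lift d x ∘ σ)

theorem lift_init (d : ℕ) (y : Fin (d + 1) → ℝ) (hy : ∑ i, y i = 1) :
    lift d (Fin.init y) = y := by
  rw [Fin.sum_univ_castSucc] at hy
  have h : 1 - ∑ i : Fin d, y i.castSucc = y (Fin.last d) := by linarith
  simp only [lift, Fin.init, h]
  exact Fin.snoc_init_self y

theorem lift_permTd (d : ℕ) (σ : Equiv.Perm (Fin (d + 1))) (x : Fin d → ℝ) :
    lift d (permTd d σ x) = lift d x ∘ σ :=
  lift_init d _ ((Equiv.sum_comp σ (lift d x)).trans (sum_lift d x))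

theorem Wg_permTd (d : ℕ) (γ : ℝ) (σ : Equiv.Perm (Fin (d + 1))) (x : Fin d → ℝ) :
    Wg d γ (permTd d σ x) = Wg d γ x := by
  rw [Wg_eq_prod_lift, Wg_eq_prod_lift, lift_permTd]
  exact congrArg (· ^ γ) (Equiv.prod_comp σ (lift d x))

theorem preimage_permTd_Td (d : ℕ) (σ : Equiv.Perm (Fin (d + 1))) :
    permTd d σ ⁻¹' Td d = Td d := by
  ext x
  rw [Set.mem_preimage, mem_Td_iff, mem_Td_iff, lift_permTd]
  exact ⟨fun h i => by simpa using h (σ⁻¹ i), fun h i => h (σ i)⟩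

/-- The linear part of `permTd`: the action on coordinates of vectors of sum zero. -/
noncomputable def permTdLinear (d : ℕ) (σ : Equiv.Perm (Fin (d + 1))) :
    (Fin d → ℝ) →ₗ[ℝ] (Fin d → ℝ) where
  toFun x := Fin.init ((Fin.snoc x (-∑ i, x i) : Fin (d + 1) → ℝ) ∘ σ)
  map_add' x y := by
    funext i
    simp only [Fin.init, Function.comp_apply, Pi.add_apply]
    refine Fin.lastCases ?_ (fun j => ?_) (σ i.castSucc)
    · simp [sum_add_distrib]; ring
    · simp
  map_smul' c x := by
    funext i
    simp only [Fin.init, Function.comp_apply, Pi.smul_apply, RingHom.id_apply, smul_eq_mul]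
    refine Fin.lastCases ?_ (fun j => ?_) (σ i.castSucc)
    · simp [mul_sum]
    · simp

theorem permTd_eq_permTdLinear_add (d : ℕ) (σ : Equiv.Perm (Fin (d + 1))) (x : Fin d → ℝ) :
    permTd d σ x = permTdLinear d σ x + permTd d σ 0 := by
  funext i
  simp only [permTd, permTdLinear, lift, LinearMap.coe_mk, AddHom.coe_mk, Fin.init,
    Function.comp_apply, Pi.add_apply]
  refine Fin.lastCases ?_ (fun j => ?_) (σ i.castSucc)
  · simp; ring
  · simp

theorem permTd_permTd (d : ℕ) (σ τ : Equiv.Perm (Fin (d + 1))) (x : Fin d → ℝ) :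
    permTd d σ (permTd d τ x) = permTd d (τ * σ) x := by
  conv_lhs => rw [permTd, lift_permTd]
  rfl

theorem permTd_one (d : ℕ) (x : Fin d → ℝ) : permTd d 1 x = x := by
  simp [permTd, lift]

theorem permTdLinear_eq_sub (d : ℕ) (σ : Equiv.Perm (Fin (d + 1))) (x : Fin d → ℝ) :
    permTdLinear d σ x = permTd d σ x - permTd d σ 0 :=
  eq_sub_of_add_eq (permTd_eq_permTdLinear_add d σ x).symm

theorem permTdLinear_one (d : ℕ) : permTdLinear d 1 = 1 := by
  refine LinearMap.ext fun x => ?_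
  simp [permTdLinear_eq_sub, permTd_one]

theorem permTdLinear_mul (d : ℕ) (σ τ : Equiv.Perm (Fin (d + 1))) :
    permTdLinear d (τ * σ) = permTdLinear d σ * permTdLinear d τ := by
  refine LinearMap.ext fun x => ?_
  rw [Module.End.mul_apply, permTdLinear_eq_sub, ← permTd_permTd, ← permTd_permTd,
    permTdLinear_eq_sub d τ, map_sub, permTdLinear_eq_sub, permTdLinear_eq_sub]
  abel

theorem permTdLinear_pow (d : ℕ) (σ : Equiv.Perm (Fin (d + 1))) (n : ℕ) :
    permTdLinear d (σ ^ n) = permTdLinear d σ ^ n := by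
  induction n with
  | zero => simp [permTdLinear_one]
  | succ n ih => rw [pow_succ, permTdLinear_mul, ih, pow_succ']

theorem abs_det_permTdLinear (d : ℕ) (σ : Equiv.Perm (Fin (d + 1))) :
    |LinearMap.det (permTdLinear d σ)| = 1 := by
  have h : |LinearMap.det (permTdLinear d σ)| ^ orderOf σ = 1 := by
    rw [← abs_pow, ← map_pow, ← permTdLinear_pow, pow_orderOf_eq_one, permTdLinear_one]
    simp
  exact (pow_eq_one_iff_of_nonneg (abs_nonneg _) (orderOf_pos σ).ne').1 h

theorem measurePreserving_permTd (d : ℕ) (σ : Equiv.Perm (Fin (d + 1))) :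
    MeasurePreserving (permTd d σ) := by
  have hdet := abs_det_permTdLinear d σ
  have hL : MeasurePreserving (permTdLinear d σ) := by
    refine ⟨(permTdLinear d σ).continuous_of_finiteDimensional.measurable, ?_⟩
    rw [Real.map_linearMap_volume_pi_eq_smul_volume_pi (by rintro h; simp [h] at hdet), abs_inv,
      hdet]
    simp
  have h := (measurePreserving_add_right volume (permTd d σ 0)).comp hL
  have heq : permTd d σ = (fun x => x + permTd d σ 0) ∘ permTdLinear d σ :=
    funext (permTd_eq_permTdLinear_add d σ)
  rw [heq]
  exact h

theorem measurableEmbedding_permTd (d : ℕ) (σ : Equiv.Perm (Fin (d + 1))) :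
    MeasurableEmbedding (permTd d σ) := by
  let e : (Fin d → ℝ) ≃ᵐ (Fin d → ℝ) :=
    { toFun := permTd d σ
      invFun := permTd d σ⁻¹
      left_inv := fun x => by rw [permTd_permTd, mul_inv_cancel, permTd_one]
      right_inv := fun x => by rw [permTd_permTd, inv_mul_cancel, permTd_one]
      measurable_toFun := (measurePreserving_permTd d σ).measurable
      measurable_invFun := (measurePreserving_permTd d σ⁻¹).measurable }
  exact e.measurableEmbedding

theorem setIntegral_Td_lift_comp_perm (d : ℕ) (γ : ℝ) (σ : Equiv.Perm (Fin (d + 1)))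
    (g : (Fin (d + 1) → ℝ) → ℝ) :
    ∫ x in Td d, g (lift d x ∘ σ) * Wg d γ x = ∫ x in Td d, g (lift d x) * Wg d γ x := by
  have h := (measurePreserving_permTd d σ).setIntegral_preimage_emb
    (measurableEmbedding_permTd d σ) (fun x => g (lift d x) * Wg d γ x) (Td d)
  rw [preimage_permTd_Td] at h
  simpa only [lift_permTd, Wg_permTd] using h

theorem measurableSet_Td (d : ℕ) : MeasurableSet (Td d) := by
  refine IsClosed.measurableSet ?_
  simp only [Td, Set.ofPred_and, Set.ofPred_forall]
  exact (isClosed_iInter fun i => isClosed_le continuous_const (continuous_apply i)).inter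
    (isClosed_le (by fun_prop) continuous_const)

theorem continuous_lift (d : ℕ) : Continuous (lift d) := by
  refine continuous_pi fun i => ?_
  refine Fin.lastCases ?_ (fun j => ?_) i
  · simp only [lift, Fin.snoc_last]; fun_prop
  · simp only [lift, Fin.snoc_castSucc]; fun_prop

theorem measurable_Wg (d : ℕ) (γ : ℝ) : Measurable (Wg d γ) := by
  unfold Wg
  fun_prop

theorem lift_mem_Icc (d : ℕ) {x : Fin d → ℝ} (hx : x ∈ Td d) (i : Fin (d + 1)) :
    lift d x i ∈ Set.Icc 0 1 := by
  rw [mem_Td_iff] at hx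
  exact ⟨hx i, (single_le_sum (fun j _ => hx j) (mem_univ i)).trans_eq (sum_lift d x)⟩

theorem rpow_le_one_add_rpow {c t γ : ℝ} (hc : 0 < c) (hct : c ≤ t) (ht : t ≤ 1) :
    t ^ γ ≤ 1 + c ^ γ := by
  rcases le_total 0 γ with hγ | hγ
  · linarith [Real.rpow_le_one (hc.le.trans hct) ht hγ, Real.rpow_nonneg hc.le γ]
  · linarith [Real.rpow_le_rpow_of_nonpos hc hct hγ]

theorem integrableOn_prod_rpow (d : ℕ) {γ : ℝ} (hγ : -1 < γ) :
    IntegrableOn (fun x : Fin d → ℝ => ∏ i, x i ^ γ) (Set.univ.pi fun _ => Set.Icc 0 1) := by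
  rw [IntegrableOn, volume_pi, Measure.restrict_pi_pi]
  refine Integrable.fintype_prod (f := fun _ t => t ^ γ) fun _ => ?_
  have h := intervalIntegral.intervalIntegrable_rpow' (a := 0) (b := 1) hγ
  rwa [intervalIntegrable_iff_integrableOn_Icc_of_le zero_le_one] at h

theorem integrableOn_Wg_last (d : ℕ) {γ c : ℝ} (hγ : -1 < γ) (hc : 0 < c) :
    IntegrableOn (Wg d γ) {x | x ∈ Td d ∧ c ≤ lift d x (Fin.last d)} := by
  have hmeas : MeasurableSet {x | x ∈ Td d ∧ c ≤ lift d x (Fin.last d)} :=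
    (measurableSet_Td d).inter (isClosed_le continuous_const
      ((continuous_apply _).comp (continuous_lift d))).measurableSet
  have hcube : {x | x ∈ Td d ∧ c ≤ lift d x (Fin.last d)} ⊆ Set.univ.pi fun _ => Set.Icc 0 1 := by
    rintro x ⟨hx, -⟩ i -
    simpa [lift] using lift_mem_Icc d hx i.castSucc
  refine Integrable.mono' (((integrableOn_prod_rpow d hγ).mono_set hcube).const_mul (1 + c ^ γ))
    (measurable_Wg d γ).aestronglyMeasurable ?_
  filter_upwards [ae_restrict_mem hmeas] with x hx
  obtain ⟨hx, hcx⟩ := hx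
  have hlast := lift_mem_Icc d hx (Fin.last d)
  have hpow := rpow_le_one_add_rpow (γ := γ) hc hcx hlast.2
  simp only [lift, Fin.snoc_last] at hpow hlast
  have hprod : 0 ≤ ∏ i, x i := prod_nonneg fun i _ => hx.1 i
  rw [Wg, Real.mul_rpow hprod hlast.1, ← Real.finsetProd_rpow _ _ fun i _ => hx.1 i,
    Real.norm_of_nonneg (mul_nonneg (prod_nonneg fun i _ => Real.rpow_nonneg (hx.1 i) _)
      (Real.rpow_nonneg hlast.1 _)), mul_comm]
  exact mul_le_mul_of_nonneg_right hpow (prod_nonneg fun i _ => Real.rpow_nonneg (hx.1 i) _)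

theorem integrableOn_Wg (d : ℕ) {γ : ℝ} (hγ : -1 < γ) : IntegrableOn (Wg d γ) (Td d) := by
  set c : ℝ := 1 / (d + 1) with hc
  have hcover : Td d ⊆ ⋃ i : Fin (d + 1), permTd d (Equiv.swap i (Fin.last d)) ⁻¹'
      {x | x ∈ Td d ∧ c ≤ lift d x (Fin.last d)} := by
    intro x hx
    have hexists : ∃ i ∈ (univ : Finset (Fin (d + 1))), c ≤ lift d x i := by
      refine exists_le_of_sum_le univ_nonempty ?_
      rw [sum_lift]
      simp only [sum_const, card_univ, Fintype.card_fin, nsmul_eq_mul, hc]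
      push_cast
      field_simp
      exact le_rfl
    obtain ⟨i, -, hi⟩ := hexists
    refine Set.mem_iUnion.2 ⟨i, ?_, ?_⟩
    · rwa [← preimage_permTd_Td d (Equiv.swap i (Fin.last d))] at hx
    · simpa [lift_permTd] using hi
  refine IntegrableOn.mono_set ?_ hcover
  rw [integrableOn_finite_iUnion]
  intro i
  have h := ((measurePreserving_permTd d (Equiv.swap i (Fin.last d))).integrableOn_comp_preimage
    (measurableEmbedding_permTd d _)).2 (integrableOn_Wg_last d hγ (c := c) (by positivity))
  refine h.congr_fun_ae (Filter.Eventually.of_forall fun x => ?_)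
  exact Wg_permTd d γ _ x

theorem integrableOn_monomial_mul_Wg (d : ℕ) {γ : ℝ} (hγ : -1 < γ) (α : Fin (d + 1) → ℕ) :
    IntegrableOn (fun x => (∏ i, lift d x i ^ α i) * Wg d γ x) (Td d) := by
  have hcont := continuous_lift d
  refine Integrable.bdd_mul (c := 1) (integrableOn_Wg d hγ)
    (Continuous.aestronglyMeasurable (by fun_prop)) ?_
  filter_upwards [ae_restrict_mem (measurableSet_Td d)] with x hx
  have h := lift_mem_Icc d hx
  rw [Real.norm_of_nonneg (prod_nonneg fun i _ => pow_nonneg (h i).1 _)]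
  exact prod_le_one (fun i _ => pow_nonneg (h i).1 _) fun i _ => pow_le_one₀ (h i).1 (h i).2

theorem integral_monomial_eq_momentS (d : ℕ) {γ : ℝ} (hγ : -1 < γ) (α : Fin (d + 1) → ℕ) :
    wg d γ * ∫ x in Td d, (∏ i, lift d x i ^ α i) * Wg d γ x =
      ((image (fun σ : Equiv.Perm (Fin (d + 1)) => α ∘ σ) univ).card : ℝ)⁻¹ *
        momentS d γ α := by
  set I := image (fun σ : Equiv.Perm (Fin (d + 1)) => α ∘ σ) univ with hI
  have hne : (I.card : ℝ) ≠ 0 := by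
    exact_mod_cast (card_pos.2 (univ_nonempty.image _)).ne'
  have hterm : ∀ β ∈ I, ∫ x in Td d, (∏ i, lift d x i ^ β i) * Wg d γ x =
      ∫ x in Td d, (∏ i, lift d x i ^ α i) * Wg d γ x := by
    intro β hβ
    obtain ⟨σ, -, rfl⟩ := mem_image.1 hβ
    simp_rw [prod_pow_comp_perm]
    exact setIntegral_Td_lift_comp_perm d γ σ⁻¹ fun y => ∏ i, y i ^ α i
  have hmoment : momentS d γ α =
      wg d γ * (I.card * ∫ x in Td d, (∏ i, lift d x i ^ α i) * Wg d γ x) := by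
    simp only [momentS, msymmEval, sum_mul]
    rw [integral_finsetSum _ fun β _ => integrableOn_monomial_mul_Wg d hγ β, sum_congr rfl hterm,
      sum_const, nsmul_eq_mul]
  rw [hmoment]
  field_simp

theorem momentS_comp_perm (d : ℕ) (γ : ℝ) (α : Fin (d + 1) → ℕ) (τ : Equiv.Perm (Fin (d + 1))) :
    momentS d γ (α ∘ τ) = momentS d γ α := by
  simp only [momentS, msymmEval_comp_perm]

theorem orbitAvg_eval (d : ℕ) (y : Fin (d + 1) → ℝ) (f : MvPolynomial (Fin (d + 1)) ℝ) :
    orbitAvg d y (fun z => MvPolynomial.eval z f) =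
      ∑ m ∈ f.support, f.coeff m * orbitAvg d y (fun z => ∏ i, z i ^ m i) := by
  simp only [orbitAvg, MvPolynomial.eval_eq', mul_sum]
  rw [sum_comm]
  exact sum_congr rfl fun m _ => sum_congr rfl fun z _ => by ring

theorem setIntegral_eval_lift (d : ℕ) {γ : ℝ} (hγ : -1 < γ) (f : MvPolynomial (Fin (d + 1)) ℝ) :
    ∫ x in Td d, MvPolynomial.eval (lift d x) f * Wg d γ x =
      ∑ m ∈ f.support, f.coeff m * ∫ x in Td d, (∏ i, lift d x i ^ m i) * Wg d γ x := by
  simp only [MvPolynomial.eval_eq', sum_mul, mul_assoc]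
  refine (integral_finsetSum _ fun (m : Fin (d + 1) →₀ ℕ) _ =>
    (integrableOn_monomial_mul_Wg d hγ m).const_mul (f.coeff m)).trans ?_
  exact sum_congr rfl fun m _ => integral_const_mul _ _

/-- Construction of cubature rules of index `4` on `𝒯^{d+1}`: if the moment equations hold
for the partitions `(4), (2,2), (2,1,1), (1,1,1,1)` and `A_5` is as stated, then the moment
equation for `(3,1)` also holds, and the cubature rule is exact for all homogeneous
polynomials of degree `4`. -/
theorem cubature_index_four_construction
    (d : ℕ) (hd : 3 ≤ d) (γ : ℝ) (hγ : -1 < γ)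
    (p : ℕ) (hp1 : 1 ≤ p) (hpd : p ≤ d)
    (a : ℝ) (ha : 0 < a) (ha1 : a ≠ 1)
    (k : Fin 4 → ℕ) (hkinj : Function.Injective k)
    (hk1 : ∀ j, 1 ≤ k j) (hkd : ∀ j, k j ≤ d + 1)
    (A : Fin 4 → ℝ) (A5 : ℝ)
    (hA5 : A5 = (momentS d γ (pvec d [3, 1]) - 2 * momentS d γ (pvec d [2, 2])) /
        (a * (a - 1) ^ 2 * p))
    (hmom : ∀ l ∈ [[4], [2, 2], [2, 1, 1], [1, 1, 1, 1]],
      ∑ j, A j * msymmEval d (pvec d l) (vk d (k j))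
          + A5 * msymmEval d (pvec d l) (uap d a p)
        = momentS d γ (pvec d l)) :
    (∑ j, A j * msymmEval d (pvec d [3, 1]) (vk d (k j))
        + A5 * msymmEval d (pvec d [3, 1]) (uap d a p)
      = momentS d γ (pvec d [3, 1]))
    ∧
    (∀ f : MvPolynomial (Fin (d + 1)) ℝ, f.IsHomogeneous 4 →
      wg d γ * ∫ x in Td d, MvPolynomial.eval (lift d x) f * Wg d γ x
        = (∑ j, A j * orbitAvg d (vk d (k j)) (fun z => MvPolynomial.eval z f))
          + A5 * orbitAvg d (uap d a p) (fun z => MvPolynomial.eval z f)) := by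
  have h31 : ∑ j, A j * msymmEval d (pvec d [3, 1]) (vk d (k j))
      + A5 * msymmEval d (pvec d [3, 1]) (uap d a p) = momentS d γ (pvec d [3, 1]) := by
    have h22 := hmom [2, 2] (by simp)
    have hp : (p : ℝ) ≠ 0 := by exact_mod_cast (by omega : p ≠ 0)
    have ha1' : a - 1 ≠ 0 := sub_ne_zero.2 ha1
    have hA5' : A5 * (a * (a - 1) ^ 2 * p) =
        momentS d γ (pvec d [3, 1]) - 2 * momentS d γ (pvec d [2, 2]) := by
      rw [hA5]
      exact div_mul_cancel₀ _ (by positivity)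
    simp only [msymmEval_three_one_vk d hd, msymmEval_three_one_uap d hd a hpd,
      mul_left_comm _ (2 : ℝ), ← mul_sum]
    linarith
  refine ⟨h31, fun f hf => ?_⟩
  have hsymm : ∀ α : Fin (d + 1) → ℕ, ∑ i, α i = 4 →
      ∑ j, A j * msymmEval d α (vk d (k j)) + A5 * msymmEval d α (uap d a p) =
        momentS d γ α := by
    intro α hα
    obtain ⟨l, hl, σ, hσ⟩ := exists_perm_eq_pvec d hd α hα
    have h : ∑ j, A j * msymmEval d (pvec d l) (vk d (k j))
        + A5 * msymmEval d (pvec d l) (uap d a p) = momentS d γ (pvec d l) := by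
      by_cases hl' : l = [3, 1]
      · exact hl' ▸ h31
      · exact hmom l (by simp at hl ⊢; tauto)
    simpa only [← hσ, msymmEval_comp_perm, momentS_comp_perm] using h
  have hmonomial : ∀ m ∈ f.support,
      wg d γ * ∫ x in Td d, (∏ i, lift d x i ^ m i) * Wg d γ x =
        ∑ j, A j * orbitAvg d (vk d (k j)) (fun z => ∏ i, z i ^ m i)
          + A5 * orbitAvg d (uap d a p) (fun z => ∏ i, z i ^ m i) := by
    intro m hm
    have hdeg : ∑ i, m i = 4 := by
      rw [← Finsupp.degree_eq_sum, ← hf (MvPolynomial.mem_support_iff.1 hm)]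
      simp [Finsupp.degree_eq_weight_one, Pi.one_def]
    rw [integral_monomial_eq_momentS d hγ, ← hsymm m hdeg]
    simp only [orbitAvg_monomial, mul_add, mul_sum]
    congr 1
    · exact sum_congr rfl fun j _ => mul_left_comm _ _ _
    · exact mul_left_comm _ _ _
  simp only [setIntegral_eval_lift d hγ, orbitAvg_eval, mul_sum]
  rw [sum_comm, ← sum_add_distrib]
  refine sum_congr rfl fun m hm => ?_
  rw [mul_left_comm, hmonomial m hm, mul_add, mul_sum, mul_left_comm (f.coeff m) A5]
  congr 1
  exact sum_congr rfl fun j _ => mul_left_comm _ _ _
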